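/- arXiv:2408.07503 — 2 statements merged into one kernel-verified Lean document; each statement's English description precedes it below -/
import Mathlib

section
/- Consider asynchronous mini-batching (Algorithm 1) run with batch size B (a positive integer) for T rounds, driven by a delay sequence d_1, …, d_T. Then for every q ∈ (0,1] and every q-quantile delay τ_q of the sequence, the number K' of epochs completed within the T rounds satisfies K' ≥ ⌊qT/(B+τ_q)⌋. In particular, if an integer K satisfies K ≤ sup over q ∈ (0,1] of ⌊qT/(B+τ_q)⌋, then at least K epochs complete within the T rounds. -/
open Finset

/-- In a block of rounds starting at `s`, all but at most `τ` of the rounds with delay at most `τ`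
are accepted. -/
theorem card_filter_delay_le (d : ℕ → ℕ) (s e τ : ℕ) :
    ((Finset.Icc s e).filter (fun t => d t ≤ τ)).card ≤
      ((Finset.Icc s e).filter (fun t => s + d t ≤ t)).card + τ := by
  have hsub : (Finset.Icc s e).filter (fun t => d t ≤ τ) ⊆
      (Finset.Icc s e).filter (fun t => s + d t ≤ t) ∪ Finset.Ico s (s + τ) := by
    intro t
    simp only [Finset.mem_union, Finset.mem_filter, Finset.mem_Icc, Finset.mem_Ico]
    omega
  calc _ ≤ _ := Finset.card_le_card hsub
    _ ≤ _ := Finset.card_union_le _ _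
    _ = _ := by simp

/-- Splitting off a final block of rounds in a count. -/
theorem card_filter_Icc_one_le (p : ℕ → Prop) [DecidablePred p] (s e : ℕ) :
    ((Finset.Icc 1 e).filter p).card ≤
      ((Finset.Ico 1 s).filter p).card + ((Finset.Icc s e).filter p).card := by
  refine (Finset.card_le_card ?_).trans (Finset.card_union_le _ _)
  intro t
  simp only [Finset.mem_union, Finset.mem_filter, Finset.mem_Icc, Finset.mem_Ico]
  rintro ⟨⟨h1, h2⟩, hp⟩
  rcases lt_or_ge t s with h | h
  · exact Or.inl ⟨⟨h1, h⟩, hp⟩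
  · exact Or.inr ⟨⟨h, h2⟩, hp⟩

/-- for Algorithm 1 (asynchronous mini-batching with batch size B)
run for T rounds with delay sequence d, the number K' of completed epochs
satisfies K' ≥ ⌊qT/(B+τ)⌋ for every q ∈ (0,1] and every q-quantile delay τ.

The epoch structure is described by the sequences `ts` (epoch start rounds) and
`es` (epoch completion rounds): epoch k covers rounds [ts k, es k]; a round t of
epoch k is accepted iff ts k ≤ t - d t (equivalently ts k + d t ≤ t); epoch k is
completed at its B-th accepted round es k (so es k is accepted and there are
exactly B accepted rounds in [ts k, es k]); and epoch k+1 starts at es k + 1.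
Exactly K' epochs complete within the T rounds: epochs 1..K' complete with
es K' ≤ T, while epoch K'+1 sees fewer than B accepted rounds up to round T. -/
theorem async_minibatch_epoch_count
    (T B : ℕ) (hT : 1 ≤ T) (hB : 1 ≤ B)
    (d : ℕ → ℕ) (hd : ∀ t, 1 ≤ t → t ≤ T → d t < t)
    (ts es : ℕ → ℕ) (K' : ℕ)
    (hts1 : ts 1 = 1)
    (hcomp : ∀ k, 1 ≤ k → k ≤ K' →
      ts k + d (es k) ≤ es k ∧ es k ≤ T ∧
      ((Finset.Icc (ts k) (es k)).filter (fun t => ts k + d t ≤ t)).card = B ∧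
      ts (k + 1) = es k + 1)
    (hincomp :
      ((Finset.Icc (ts (K' + 1)) T).filter (fun t => ts (K' + 1) + d t ≤ t)).card < B)
    (q : ℝ) (hq0 : 0 < q) (hq1 : q ≤ 1)
    (τ : ℕ)
    (hτ : (⌈q * T⌉₊ : ℕ) ≤ ((Finset.Icc 1 T).filter (fun t => d t ≤ τ)).card) :
    ⌊q * T / ((B : ℝ) + τ)⌋₊ ≤ K' := by
  have hepochs : ∀ k, k ≤ K' →
      ((Finset.Ico 1 (ts (k + 1))).filter (fun t => d t ≤ τ)).card ≤ k * (B + τ) := by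
    intro k
    induction k with
    | zero => intro _; simp [hts1]
    | succ k ih =>
      intro hk
      obtain ⟨-, -, hcard, hnext⟩ := hcomp (k + 1) (by omega) hk
      have hprev := ih (by omega)
      have hblock := card_filter_delay_le d (ts (k + 1)) (es (k + 1)) τ
      have hsplit := card_filter_Icc_one_le (fun t => d t ≤ τ) (ts (k + 1)) (es (k + 1))
      have hIco : Finset.Ico 1 (ts (k + 1 + 1)) = Finset.Icc 1 (es (k + 1)) := by
        ext t
        simp only [Finset.mem_Ico, Finset.mem_Icc]
        omega
      rw [hIco, add_one_mul]
      omega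
  have hfull := hepochs K' le_rfl
  have hlast := card_filter_delay_le d (ts (K' + 1)) T τ
  have hsplit := card_filter_Icc_one_le (fun t => d t ≤ τ) (ts (K' + 1)) T
  have hlt : ⌈q * T⌉₊ < (K' + 1) * (B + τ) := by
    rw [add_one_mul]
    omega
  have hqT : q * T < ((K' : ℝ) + 1) * (B + τ) := by
    refine (Nat.le_ceil (q * T)).trans_lt ?_
    exact_mod_cast hlt
  have hpos : (0 : ℝ) < (B : ℝ) + τ := by positivity
  rw [← Nat.lt_add_one_iff, Nat.floor_lt (by positivity), div_lt_iff₀ hpos]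
  exact_mod_cast hqT
end

section
/- Let T ≥ 1 be an integer, let w⋆ ≤ w_1 be real numbers, let η > 0 and ε > 0 satisfy 2εηT ≤ 1, and let d_1, …, d_T be integers with 0 ≤ d_t ≤ t−1 for every t. Define the iterates w_{t+1} = w_t − η·ε·(w_{t−d_t} − w⋆) for t = 1, …, T. Then for every t ∈ {1, …, T+1}: (w_1 − w⋆)/2 ≤ w_t − w⋆ ≤ w_1 − w⋆. -/
/-- the key inductive claim in the small-stepsize lower bound for
delayed gradient descent on the quadratic f(w) = (ε/2)(w − w⋆)²: if
2εηT ≤ 1, then all iterates of w_{t+1} = w_t − η·ε·(w_{t−d_t} − w⋆) (for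
t = 1, …, T, started at w_1 ≥ w⋆) satisfy
(w_1 − w⋆)/2 ≤ w_t − w⋆ ≤ w_1 − w⋆ for every t ∈ {1, …, T+1}. -/
theorem delayed_gd_iterates_stay_in_interval
    (T : ℕ) (hT : 1 ≤ T)
    (wstar w1 : ℝ) (hle : wstar ≤ w1)
    (η ε : ℝ) (hη : 0 < η) (hε : 0 < ε)
    (hdrift : 2 * ε * η * T ≤ 1)
    (d : ℕ → ℕ) (hd : ∀ t, 1 ≤ t → t ≤ T → d t ≤ t - 1)
    (w : ℕ → ℝ) (hw1 : w 1 = w1)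
    (hrec : ∀ t, 1 ≤ t → t ≤ T → w (t + 1) = w t - η * ε * (w (t - d t) - wstar)) :
    ∀ t, 1 ≤ t → t ≤ T + 1 →
      (w1 - wstar) / 2 ≤ w t - wstar ∧ w t - wstar ≤ w1 - wstar := by
  have half_le : ∀ t : ℕ, t ≤ T + 1 →
      (w1 - wstar) / 2 ≤ (1 - η * ε * ((t : ℝ) - 1)) * (w1 - wstar) := by
    intro t ht
    have htT : (t : ℝ) - 1 ≤ T := by
      have : (t : ℝ) ≤ T + 1 := by exact_mod_cast ht
      linarith
    have hdrift_t : η * ε * ((t : ℝ) - 1) ≤ 1 / 2 := by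
      have := mul_le_mul_of_nonneg_left htT (mul_pos hη hε).le
      linarith
    have := mul_le_mul_of_nonneg_right hdrift_t (sub_nonneg.2 hle)
    linarith
  -- Each step decreases the gap by at most `η * ε * (w1 - wstar)`.
  have linear_bound : ∀ t : ℕ, 1 ≤ t → t ≤ T + 1 →
      (1 - η * ε * ((t : ℝ) - 1)) * (w1 - wstar) ≤ w t - wstar ∧
        w t - wstar ≤ w1 - wstar := by
    intro t
    induction t using Nat.strong_induction_on with
    | _ t ih =>
      intro h1 hT1
      obtain rfl | ⟨s, hs, rfl⟩ : t = 1 ∨ ∃ s, 1 ≤ s ∧ t = s + 1 := by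
        by_cases h : t = 1
        · exact Or.inl h
        · exact Or.inr ⟨t - 1, by omega, by omega⟩
      · simp [hw1]
      · have hds := hd s hs (by omega)
        obtain ⟨hlow, hup⟩ := ih s (by omega) hs (by omega)
        obtain ⟨hlow_delay, hup_delay⟩ := ih (s - d s) (by omega) (by omega) (by omega)
        have hgrad_nonneg : 0 ≤ w (s - d s) - wstar := by
          linarith [half_le (s - d s) (by omega)]
        have hstep_nonneg := mul_nonneg (mul_pos hη hε).le hgrad_nonneg
        have hstep_le := mul_le_mul_of_nonneg_left hup_delay (mul_pos hη hε).le
        rw [hrec s hs (by omega)]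
        push_cast
        constructor <;> linarith
  intro t h1 hT1
  obtain ⟨hlow, hup⟩ := linear_bound t h1 hT1
  exact ⟨(half_le t hT1).trans hlow, hup⟩
end
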